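/- Assume d ≥ 2 and let (g_ε) be (s,γ)-admissible for some s > d/(d+1) and γ > 1. Then there exists a constant C' < ∞, independent of ε, such that for every ε ∈ (0,1) and every radial function v ∈ L²(ℝ^d) whose Fourier transform v̂ is supported in the spherical shell {ξ ∈ ℝ^d : 1/2 ≤ |ξ| ≤ 3/2} and with q_ε(v) < ∞, the function v has a continuous representative satisfying |v(x)| ≤ C' (1+|x|)^{(1−d)/2} ε^{(1/γ − 1)/2} q_ε(v)^{1/2} for all x ∈ ℝ^d. -/

import Mathlib

open MeasureTheory Real Filter
open scoped ENNReal FourierTransform RealInnerProductSpace Topology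

noncomputable section

/-- Euclidean space `ℝ^d`. -/
abbrev Rd (d : ℕ) : Type := EuclideanSpace ℝ (Fin d)

/-- `U` is the (distributional, hence `L²`-) Fourier transform of `u`:
it pairs against Schwartz functions the way the Fourier transform of `u` must. -/
def IsFT {d : ℕ} (U u : Rd d → ℂ) : Prop :=
  ∀ φ : SchwartzMap (Rd d) ℂ, ∫ ξ, U ξ * φ ξ = ∫ x, u x * 𝓕 (⇑φ) x

/-- An element of `H^s(ℝ^d)`: an `L²` function `toFun` together with its Fourier
transform `ft`, satisfying the `H^s` integrability condition. -/
structure HsFn (d : ℕ) (s : ℝ) where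
  toFun : Rd d → ℂ
  ft : Rd d → ℂ
  memL2 : MemLp toFun 2 volume
  ft_memL2 : MemLp ft 2 volume
  isFT : IsFT ft toFun
  memHs : Integrable (fun ξ : Rd d => ‖ft ξ‖ ^ 2 * (1 + ‖ξ‖ ^ 2) ^ s) volume

/-- The quadratic form `q_ε(u) = ∫ |û(ξ)|² g(|ξ|) dξ` (for a fixed symbol `g`). -/
def qeps {d : ℕ} {s : ℝ} (g : ℝ → ℝ) (u : HsFn d s) : ℝ :=
  ∫ ξ : Rd d, ‖u.ft ξ‖ ^ 2 * g ‖ξ‖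

/-- The `L^p` norm (as a real number). -/
def LpN {d : ℕ} (p : ℝ) (f : Rd d → ℂ) : ℝ :=
  (eLpNorm f (ENNReal.ofReal p) volume).toReal

/-- The set of values of the Rayleigh quotient `q_ε(u)/‖u‖_p²` over nonzero
`u ∈ H^s` satisfying the symmetry constraint `P`. -/
def RayleighSet (d : ℕ) (s p : ℝ) (g : ℝ → ℝ) (P : (Rd d → ℂ) → Prop) : Set ℝ :=
  {t | ∃ u : HsFn d s, P u.toFun ∧ ¬ u.toFun =ᵐ[volume] (fun _ => (0 : ℂ)) ∧
      MemLp u.toFun (ENNReal.ofReal p) volume ∧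
      t = qeps g u / LpN p u.toFun ^ 2}

/-- The Rayleigh quotient infimum. -/
def Rayleigh (d : ℕ) (s p : ℝ) (g : ℝ → ℝ) (P : (Rd d → ℂ) → Prop) : ℝ :=
  sInf (RayleighSet d s p g P)

/-- The Rayleigh quotient infimum is attained. -/
def Attained (d : ℕ) (s p : ℝ) (g : ℝ → ℝ) (P : (Rd d → ℂ) → Prop) : Prop :=
  ∃ u : HsFn d s, P u.toFun ∧ ¬ u.toFun =ᵐ[volume] (fun _ => (0 : ℂ)) ∧
      MemLp u.toFun (ENNReal.ofReal p) volume ∧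
      qeps g u / LpN p u.toFun ^ 2 = Rayleigh d s p g P

/-- A radial function. -/
def Radial {d : ℕ} (f : Rd d → ℂ) : Prop := ∀ x y : Rd d, ‖x‖ = ‖y‖ → f x = f y

/-- The squared norm of the first block of coordinates (the first `d - k` ones),
under the identification `ℝ^d = ℝ^{d-k} × ℝ^k`. -/
def blockSq (d k : ℕ) (x : Rd d) : ℝ := ∑ i : Fin d, if (i : ℕ) < d - k then x i ^ 2 else 0

/-- A `G_k = O(d-k) × O(k)`-symmetric function: it depends only on the norms of the
two blocks of coordinates. -/
def GkSymmetric (d k : ℕ) (f : Rd d → ℂ) : Prop :=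
  ∀ x y : Rd d, blockSq d k x = blockSq d k y → ‖x‖ = ‖y‖ → f x = f y

/-- An `(s,γ)`-admissible family of symbols, with admissibility constants `c, C`. -/
def IsAdmissible (s γ c C : ℝ) (g : ℝ → ℝ → ℝ) : Prop :=
  (∀ ε ∈ Set.Ioo (0:ℝ) 1, Measurable (g ε)) ∧
  (∀ ε ∈ Set.Ioo (0:ℝ) 1, ∀ r : ℝ, 0 < g ε r) ∧
  (∀ ε ∈ Set.Ioo (0:ℝ) 1, ∀ r : ℝ, 1/2 ≤ |r - 1| →
      c * (1 + |r| ^ (2*s)) ≤ g ε r ∧ g ε r ≤ C * (1 + |r| ^ (2*s))) ∧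
  (∀ ε ∈ Set.Ioo (0:ℝ) 1, ∀ r : ℝ, |r - 1| ≤ 1/2 →
      c * (ε + |r - 1| ^ γ) ≤ g ε r ∧ g ε r ≤ C * (ε + |r - 1| ^ γ))

/-- The `G_k`-symmetric Stein–Tomas exponent `2_⋆^k`. -/
def twoStarK (d k : ℕ) : ℝ :=
  2 * ((d : ℝ) + (min k (d - k) : ℕ)) / ((d : ℝ) - 2 + (min k (d - k) : ℕ))

/-- The interpolation parameter `α_k`. -/
def alphaK (d k : ℕ) (p : ℝ) : ℝ := (1/2 - 1/p) / (1/2 - 1/twoStarK d k)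

/-- The spherical shell `A_{ε,δ}` around the unit sphere (with `I_{ε,δ}` scale `ε^{1/γ}`). -/
def Aset (d : ℕ) (γ ε δ : ℝ) : Set (Rd d) :=
  {ξ | δ * ε ^ (1/γ) ≤ |‖ξ‖ - 1| ∧ |‖ξ‖ - 1| ≤ δ⁻¹ * ε ^ (1/γ)}

/-- A rotation-invariant finite nonzero measure on the unit sphere. -/
lemma exists_sphere_measure (d : ℕ) (hd : 1 ≤ d) : ∃ μ : Measure (Rd d), IsFiniteMeasure μ ∧
    μ ≠ 0 ∧ (∀ᵐ ω ∂μ, ‖ω‖ = 1) ∧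
    ∀ R : Rd d ≃ₗᵢ[ℝ] Rd d, MeasurePreserving R μ μ := by
  have hne : Nonempty (Fin d) := ⟨⟨0, hd⟩⟩
  have hm : Measurable (fun x : Rd d => ‖x‖⁻¹ • x) := by fun_prop
  refine ⟨(volume.restrict (Metric.ball (0 : Rd d) 1)).map (fun x => ‖x‖⁻¹ • x), ?_, ?_, ?_, ?_⟩
  · have : IsFiniteMeasure (volume.restrict (Metric.ball (0 : Rd d) 1)) :=
      ⟨by simpa using measure_ball_lt_top⟩
    infer_instance
  · rw [Ne, Measure.map_eq_zero_iff hm.aemeasurable, Measure.restrict_eq_zero]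
    exact (Metric.measure_ball_pos volume (0 : Rd d) one_pos).ne'
  · rw [ae_map_iff hm.aemeasurable (measurableSet_eq_fun (by fun_prop) (by fun_prop))]
    apply ae_restrict_of_ae
    have : ∀ᵐ x : Rd d, x ≠ 0 := by
      simp [ae_iff]
    filter_upwards [this] with x hx
    rw [norm_smul, norm_inv, norm_norm, inv_mul_cancel₀ (norm_ne_zero_iff.2 hx)]
  · intro R
    have hR : Measurable R := R.continuous.measurable
    have h1 : MeasurePreserving R (volume.restrict (Metric.ball (0 : Rd d) 1))
        (volume.restrict (Metric.ball (0 : Rd d) 1)) := by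
      have := (R.measurePreserving).restrict_preimage (s := Metric.ball (0 : Rd d) 1)
        Metric.isOpen_ball.measurableSet
      have h2 : R ⁻¹' Metric.ball (0 : Rd d) 1 = Metric.ball (0 : Rd d) 1 := by
        ext x; simp
      rwa [h2] at this
    refine ⟨hR, ?_⟩
    rw [Measure.map_map hR hm]
    have h3 : (R ∘ fun x : Rd d => ‖x‖⁻¹ • x) = (fun x : Rd d => ‖x‖⁻¹ • x) ∘ R := by
      ext1 x; simp
    rw [h3, ← Measure.map_map hm hR, h1.map_eq]

lemma exists_isometry {d : ℕ} {a b : Rd d} (h : ‖a‖ = ‖b‖) :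
    ∃ R : Rd d ≃ₗᵢ[ℝ] Rd d, R a = b :=
  ⟨_, Submodule.reflection_sub h⟩

lemma rot_inv {d : ℕ} {μ : Measure (Rd d)}
    (hR : ∀ R : Rd d ≃ₗᵢ[ℝ] Rd d, MeasurePreserving R μ μ) {a b : Rd d} (h : ‖a‖ = ‖b‖)
    (f : ℝ → ℝ) : ∫ ω, f ⟪a, ω⟫ ∂μ = ∫ ω, f ⟪b, ω⟫ ∂μ := by
  obtain ⟨R, rfl⟩ := exists_isometry h
  have := (hR R).integral_comp R.toHomeomorph.measurableEmbedding (fun ω => f ⟪R a, ω⟫)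
  simpa using this

lemma energy_bound (n : ℕ) (hn : 1 ≤ n) (J J1 J2 : ℝ → ℝ) (M : ℝ)
    (h1 : ∀ t, HasDerivAt J (J1 t) t) (h2 : ∀ t, HasDerivAt J1 (J2 t) t)
    (hode : ∀ t, 0 < t → t * (J t + J2 t) = - n * J1 t) (hM : ∀ t, |J t| ≤ M) :
    ∃ K : ℝ, 0 < K ∧ ∀ t, 0 ≤ t → |J t| ≤ K * (1 + t) ^ (-(n : ℝ) / 2) := by
  have hn0 : (1 : ℝ) ≤ n := by exact_mod_cast hn
  set E : ℝ → ℝ := fun t => t ^ n * (J t ^ 2 + J1 t ^ 2) + n * (t ^ n / t) * (J t * J1 t) with hE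
  have hEd : ∀ t, 0 < t → HasDerivAt E (- n * (t ^ n / t ^ 2) * (J t * J1 t)) t := by
    intro t ht
    have hp : HasDerivAt (fun t : ℝ => t ^ n) (n * (t ^ n / t)) t := by
      convert! hasDerivAt_pow n t using 1
      obtain ⟨m, rfl⟩ : ∃ m, n = m + 1 := ⟨n - 1, by omega⟩
      simp only [Nat.add_sub_cancel, pow_succ]
      field_simp
    have hq := hp.div (hasDerivAt_id t) ht.ne'
    have := (hp.mul (((h1 t).pow 2).add ((h2 t).pow 2))).add
      ((hq.const_mul (n : ℝ)).mul ((h1 t).mul (h2 t)))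
    refine (this.congr_deriv ?_)
    have h2' : J2 t = - n * J1 t / t - J t := by
      have := hode t ht
      field_simp
      linarith
    simp only [id, h2', Pi.pow_apply, Pi.add_apply, Pi.mul_apply, Pi.div_apply]
    field_simp
    ring
  have hlow : ∀ t, (n : ℝ) ≤ t → t ^ n / 2 * (J t ^ 2 + J1 t ^ 2) ≤ E t := by
    intro t ht
    have ht0 : 0 < t := by linarith
    have h0 : |(n : ℝ) / t * (J t * J1 t)| ≤ (J t ^ 2 + J1 t ^ 2) / 2 := by
      rw [abs_mul, abs_of_nonneg (by positivity)]
      have : (n : ℝ) / t ≤ 1 := by rw [div_le_one ht0]; exact ht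
      have h3 : |J t * J1 t| ≤ (J t ^ 2 + J1 t ^ 2) / 2 := by
        rw [abs_le]; constructor <;> nlinarith [sq_nonneg (J t - J1 t), sq_nonneg (J t + J1 t)]
      calc _ ≤ 1 * |J t * J1 t| := by gcongr
        _ ≤ _ := by linarith
    have h4 := (abs_le.1 h0).1
    have h5 : 0 < t ^ n := by positivity
    have h6 : E t = t ^ n * (J t ^ 2 + J1 t ^ 2 + n / t * (J t * J1 t)) := by
      simp only [hE]; ring
    rw [h6]
    nlinarith
  have hanti : AntitoneOn (fun t => E t * Real.exp (n / t)) (Set.Ici (n : ℝ)) := by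
    have hder : ∀ t, (n : ℝ) ≤ t → HasDerivAt (fun t => E t * Real.exp (n / t))
        ((- n * (t ^ n / t ^ 2) * (J t * J1 t)) * Real.exp (n / t) +
          E t * (Real.exp (n / t) * (- n / t ^ 2))) t := by
      intro t ht
      have ht0 : 0 < t := by linarith
      have h7 : HasDerivAt (fun t : ℝ => (n : ℝ) / t) (- n / t ^ 2) t := by
        convert! (hasDerivAt_const t (n : ℝ)).div (hasDerivAt_id t) ht0.ne' using 1
        simp
      exact (hEd t ht0).mul h7.exp
    apply antitoneOn_of_deriv_nonpos (convex_Ici _)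
    · intro t ht
      exact (hder t ht).continuousAt.continuousWithinAt
    · intro t ht
      rw [interior_Ici] at ht
      exact (hder t (le_of_lt ht)).differentiableAt.differentiableWithinAt
    · intro t ht
      rw [interior_Ici] at ht
      have ht' : (n : ℝ) ≤ t := le_of_lt ht
      rw [(hder t ht').deriv]
      have ht0 : 0 < t := by linarith
      have h8 := hlow t ht'
      have h9 : - n * (t ^ n / t ^ 2) * (J t * J1 t) ≤ n / t ^ 2 * E t := by
        calc - n * (t ^ n / t ^ 2) * (J t * J1 t) = n / t ^ 2 * (t ^ n * (-(J t * J1 t))) := by ring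
          _ ≤ n / t ^ 2 * (t ^ n * ((J t ^ 2 + J1 t ^ 2) / 2)) := by
            gcongr
            nlinarith [sq_nonneg (J t + J1 t)]
          _ ≤ _ := by
            gcongr
            linarith
      have h10 := Real.exp_pos (n / t)
      have : (- n * (t ^ n / t ^ 2) * (J t * J1 t) - n / t ^ 2 * E t) * Real.exp (n / t) ≤ 0 :=
        mul_nonpos_of_nonpos_of_nonneg (by linarith) h10.le
      calc _ = (- n * (t ^ n / t ^ 2) * (J t * J1 t) - n / t ^ 2 * E t) * Real.exp (n / t) := by
            ring
        _ ≤ 0 := this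
  -- large-t bound
  set B : ℝ := 2 * (E n * Real.exp (n / n)) with hB
  have hlarge : ∀ t, (n : ℝ) ≤ t → t ^ n * J t ^ 2 ≤ B := by
    intro t ht
    have ht0 : 0 < t := by linarith
    have ha := hanti (Set.mem_Ici.2 le_rfl) (Set.mem_Ici.2 ht) ht
    simp only at ha
    have hl := hlow t ht
    have h0 : 0 ≤ t ^ n / 2 * (J t ^ 2 + J1 t ^ 2) := by positivity
    have h1e : 1 ≤ Real.exp (n / t) := Real.one_le_exp (by positivity)
    have h5 : 0 < t ^ n := by positivity
    have : E t ≤ E t * Real.exp (n / t) := le_mul_of_one_le_right (by linarith) h1e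
    have h6 : 0 ≤ t ^ n * J1 t ^ 2 := by positivity
    nlinarith
  have hM0 : 0 ≤ M := (abs_nonneg _).trans (hM 0)
  have hB0 : 0 ≤ B := le_trans (by positivity) (hlarge n le_rfl)
  -- combine
  set A : ℝ := (1 + n) ^ n * M ^ 2 + 2 ^ n * B + 1 with hA
  have hsq : ∀ t, 0 ≤ t → (1 + t) ^ n * J t ^ 2 ≤ A := by
    intro t ht
    rcases le_total (n : ℝ) t with h | h
    · have : (1 + t) ^ n ≤ (2 * t) ^ n := by gcongr; linarith
      have h3 := hlarge t h
      calc (1 + t) ^ n * J t ^ 2 ≤ (2 * t) ^ n * J t ^ 2 := by gcongr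
        _ = 2 ^ n * (t ^ n * J t ^ 2) := by rw [mul_pow]; ring
        _ ≤ 2 ^ n * B := by gcongr
        _ ≤ A := by
          have : 0 ≤ (1 + n) ^ n * M ^ 2 := by positivity
          linarith
    · have h3 : J t ^ 2 ≤ M ^ 2 := sq_le_sq' (by linarith [(abs_le.1 (hM t)).1]) (abs_le.1 (hM t)).2
      calc (1 + t) ^ n * J t ^ 2 ≤ (1 + n) ^ n * M ^ 2 := by gcongr
        _ ≤ A := by
          have : 0 ≤ 2 ^ n * B := by positivity
          linarith
  have hA0 : 0 < A := by positivity
  refine ⟨√A, Real.sqrt_pos.2 hA0, fun t ht => ?_⟩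
  have h1t : 0 < 1 + t := by linarith
  rw [neg_div, Real.rpow_neg h1t.le, ← div_eq_mul_inv, le_div_iff₀ (by positivity)]
  apply Real.le_sqrt_of_sq_le
  rw [mul_pow, sq_abs, ← Real.rpow_natCast ((1 + t) ^ ((n : ℝ) / 2)), ← Real.rpow_mul h1t.le]
  norm_num
  linarith [hsq t ht]

lemma deriv_under {d : ℕ} {μ : Measure (Rd d)} [IsFiniteMeasure μ] (F F' : ℝ → Rd d → ℝ) (B0 B : ℝ)
    (hF : ∀ t, Continuous (F t)) (hF' : ∀ t, Continuous (F' t))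
    (hb0 : ∀ᵐ ω ∂μ, ∀ t, |F t ω| ≤ B0)
    (hb : ∀ᵐ ω ∂μ, ∀ t, |F' t ω| ≤ B) (hd : ∀ ω t, HasDerivAt (F · ω) (F' t ω) t) (t : ℝ) :
    HasDerivAt (fun t => ∫ ω, F t ω ∂μ) (∫ ω, F' t ω ∂μ) t := by
  refine (hasDerivAt_integral_of_dominated_loc_of_deriv_le (s := Set.univ) (bound := fun _ => B)
    univ_mem (.of_forall fun t => (hF t).aestronglyMeasurable) ?_ (hF' t).aestronglyMeasurable ?_
    (integrable_const _) ?_).2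
  · exact Integrable.of_bound (hF t).aestronglyMeasurable B0 (hb0.mono fun ω h => h t)
  · exact hb.mono fun ω h x _ => h x
  · exact .of_forall fun ω x _ => hd ω x

lemma sphere_decay (n : ℕ) (hn : 1 ≤ n) {μ : Measure (Rd (n+1))} [IsFiniteMeasure μ]
    (hμ : ∀ᵐ ω ∂μ, ‖ω‖ = 1)
    (hR : ∀ R : Rd (n+1) ≃ₗᵢ[ℝ] Rd (n+1), MeasurePreserving R μ μ) :
    ∃ K : ℝ, 0 < K ∧ ∀ t, 0 ≤ t →
      |∫ ω : Rd (n+1), Real.cos (t * ω 0) ∂μ| ≤ K * (1 + t) ^ (-(n : ℝ) / 2) := by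
  have hco : ∀ᵐ ω ∂μ, ∀ i : Fin (n+1), |ω i| ≤ 1 := by
    filter_upwards [hμ] with ω h i
    rw [← h]
    exact PiLp.norm_apply_le ω i
  have hc1 : ∀ x, |Real.cos x| ≤ 1 := Real.abs_cos_le_one
  have hs1 : ∀ x, |Real.sin x| ≤ 1 := Real.abs_sin_le_one
  refine energy_bound n hn (fun t => ∫ ω : Rd (n+1), Real.cos (t * ω 0) ∂μ)
    (fun t => ∫ ω : Rd (n+1), (- Real.sin (t * ω 0) * ω 0) ∂μ)
    (fun t => ∫ ω : Rd (n+1), (- Real.cos (t * ω 0) * ω 0 * ω 0) ∂μ) (μ.real Set.univ) ?_ ?_ ?_ ?_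
  · refine deriv_under _ _ 1 1 (fun t => by fun_prop) (fun t => by fun_prop) ?_ ?_ ?_
    · exact .of_forall fun ω t => hc1 _
    · filter_upwards [hco] with ω h t
      rw [abs_mul, abs_neg]
      exact mul_le_one₀ (hs1 _) (abs_nonneg _) (h 0)
    · intro ω t
      simpa using ((hasDerivAt_id t).mul_const (ω 0)).cos
  · refine deriv_under _ _ 1 1 (fun t => by fun_prop) (fun t => by fun_prop) ?_ ?_ ?_
    · filter_upwards [hco] with ω h t
      rw [abs_mul, abs_neg]
      exact mul_le_one₀ (hs1 _) (abs_nonneg _) (h 0)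
    · filter_upwards [hco] with ω h t
      rw [abs_mul, abs_mul, abs_neg]
      exact mul_le_one₀ (mul_le_one₀ (hc1 _) (abs_nonneg _) (h 0)) (abs_nonneg _) (h 0)
    · intro ω t
      simpa using (((hasDerivAt_id t).mul_const (ω 0)).sin.neg.mul_const (ω 0))
  · intro t ht
    -- rotation identity
    have hib : ∀ (f : Rd (n+1) → ℝ), Continuous f → (∃ B, ∀ᵐ ω ∂μ, |f ω| ≤ B) → Integrable f μ :=
      fun f hf ⟨B, hB⟩ => Integrable.of_bound hf.aestronglyMeasurable B hB
    have hi1 : Integrable (fun ω : Rd (n+1) => Real.sin (t * ω 0) * ω 0) μ := by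
      refine hib _ (by fun_prop) ⟨1, ?_⟩
      filter_upwards [hco] with ω h
      rw [abs_mul]
      exact mul_le_one₀ (hs1 _) (abs_nonneg _) (h 0)
    have hi2 : ∀ i, Integrable (fun ω : Rd (n+1) => Real.cos (t * ω 0) * (ω i) ^ 2) μ := by
      intro i
      refine hib _ (by fun_prop) ⟨1, ?_⟩
      filter_upwards [hco] with ω h
      rw [abs_mul, abs_pow]
      exact mul_le_one₀ (hc1 _) (by positivity) (pow_le_one₀ (abs_nonneg _) (h i))
    have hi3 : Integrable (fun ω : Rd (n+1) => Real.cos (t * ω 0)) μ :=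
      hib _ (by fun_prop) ⟨1, .of_forall fun ω => hc1 _⟩
    have key : ∀ i : Fin (n+1), i ≠ 0 →
        t * ∫ ω : Rd (n+1), Real.cos (t * ω 0) * (ω i) ^ 2 ∂μ
          = ∫ ω : Rd (n+1), Real.sin (t * ω 0) * ω 0 ∂μ := by
      intro i hi
      -- the constant function G
      have hG : ∀ θ : ℝ, ∫ ω : Rd (n+1), Real.cos (t * (Real.cos θ * ω 0 + Real.sin θ * ω i)) ∂μ
          = ∫ ω : Rd (n+1), Real.cos (t * ω 0) ∂μ := by
        intro θ
        have hnorm : ‖(Real.cos θ • EuclideanSpace.single (0 : Fin (n+1)) (1:ℝ) +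
            Real.sin θ • EuclideanSpace.single i (1:ℝ) : Rd (n+1))‖ =
            ‖(EuclideanSpace.single (0 : Fin (n+1)) (1:ℝ) : Rd (n+1))‖ := by
          have : ⟪Real.cos θ • (EuclideanSpace.single (0 : Fin (n+1)) (1:ℝ) : Rd (n+1)),
            Real.sin θ • (EuclideanSpace.single i (1:ℝ) : Rd (n+1))⟫ = 0 := by
            simp [inner_smul_left, inner_smul_right, EuclideanSpace.inner_single_left, hi.symm]
          have h2 := norm_add_sq_eq_norm_sq_add_norm_sq_of_inner_eq_zero _ _ this
          rw [← sq_eq_sq₀ (norm_nonneg _) (norm_nonneg _), sq, h2]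
          simp [norm_smul, ← sq]
        have := rot_inv hR hnorm (fun x => Real.cos (t * x))
        simpa [inner_add_left, inner_smul_left, EuclideanSpace.inner_single_left] using this
      have hL : ∀ᵐ ω ∂μ, ∀ θ : ℝ, |Real.cos θ * ω 0 + Real.sin θ * ω i| ≤ 2 ∧
          |-Real.sin θ * ω 0 + Real.cos θ * ω i| ≤ 2 := by
        filter_upwards [hco] with ω h θ
        have e1 : |Real.cos θ * ω 0| ≤ 1 := by
          rw [abs_mul]; exact mul_le_one₀ (hc1 _) (abs_nonneg _) (h 0)
        have e2 : |Real.sin θ * ω i| ≤ 1 := by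
          rw [abs_mul]; exact mul_le_one₀ (hs1 _) (abs_nonneg _) (h i)
        have e3 : |-Real.sin θ * ω 0| ≤ 1 := by
          rw [abs_mul, abs_neg]; exact mul_le_one₀ (hs1 _) (abs_nonneg _) (h 0)
        have e4 : |Real.cos θ * ω i| ≤ 1 := by
          rw [abs_mul]; exact mul_le_one₀ (hc1 _) (abs_nonneg _) (h i)
        exact ⟨(abs_add_le _ _).trans (by linarith), (abs_add_le _ _).trans (by linarith)⟩
      have hlin : ∀ (ω : Rd (n+1)) (θ : ℝ), HasDerivAt
          (fun θ => t * (Real.cos θ * ω 0 + Real.sin θ * ω i))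
          (t * (-Real.sin θ * ω 0 + Real.cos θ * ω i)) θ := fun ω θ =>
        (((Real.hasDerivAt_cos θ).mul_const _).add ((Real.hasDerivAt_sin θ).mul_const _)).const_mul t
      have hlin2 : ∀ (ω : Rd (n+1)) (θ : ℝ), HasDerivAt
          (fun θ => t * (-Real.sin θ * ω 0 + Real.cos θ * ω i))
          (t * (-Real.cos θ * ω 0 + -Real.sin θ * ω i)) θ := fun ω θ =>
        (((Real.hasDerivAt_sin θ).neg.mul_const _).add
          ((Real.hasDerivAt_cos θ).mul_const _)).const_mul t
      have hb1 : ∀ᵐ ω ∂μ, ∀ θ : ℝ, |-Real.sin (t * (Real.cos θ * ω 0 + Real.sin θ * ω i)) *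
            (t * (-Real.sin θ * ω 0 + Real.cos θ * ω i))| ≤ 1 * (t * 2) := by
        filter_upwards [hL] with ω h θ
        rw [abs_mul, abs_neg, abs_mul t, abs_of_pos ht]
        gcongr
        · exact hs1 _
        · exact (h θ).2
      have hD1 : ∀ θ : ℝ, HasDerivAt
          (fun θ : ℝ => ∫ ω : Rd (n+1), Real.cos (t * (Real.cos θ * ω 0 + Real.sin θ * ω i)) ∂μ)
          (∫ ω : Rd (n+1), -Real.sin (t * (Real.cos θ * ω 0 + Real.sin θ * ω i)) *
            (t * (-Real.sin θ * ω 0 + Real.cos θ * ω i)) ∂μ) θ := by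
        refine deriv_under _ _ 1 _ (fun t => by fun_prop) (fun t => by fun_prop) ?_ hb1 ?_
        · exact .of_forall fun ω t => hc1 _
        · intro ω θ
          exact (hlin ω θ).cos
      have hD2 : HasDerivAt (fun θ : ℝ => ∫ ω : Rd (n+1),
            -Real.sin (t * (Real.cos θ * ω 0 + Real.sin θ * ω i)) *
            (t * (-Real.sin θ * ω 0 + Real.cos θ * ω i)) ∂μ)
          (∫ ω : Rd (n+1),
            (-(Real.cos (t * (Real.cos 0 * ω 0 + Real.sin 0 * ω i)) *
              (t * (-Real.sin 0 * ω 0 + Real.cos 0 * ω i))) *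
            (t * (-Real.sin 0 * ω 0 + Real.cos 0 * ω i)) +
            -Real.sin (t * (Real.cos 0 * ω 0 + Real.sin 0 * ω i)) *
            (t * (-Real.cos 0 * ω 0 + -Real.sin 0 * ω i))) ∂μ) 0 := by
        refine deriv_under _ (fun (θ : ℝ) (ω : Rd (n+1)) =>
            (-(Real.cos (t * (Real.cos θ * ω 0 + Real.sin θ * ω i)) *
              (t * (-Real.sin θ * ω 0 + Real.cos θ * ω i))) *
            (t * (-Real.sin θ * ω 0 + Real.cos θ * ω i)) +
            -Real.sin (t * (Real.cos θ * ω 0 + Real.sin θ * ω i)) *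
            (t * (-Real.cos θ * ω 0 + -Real.sin θ * ω i)))) _
            (1 * (t * 2) * (t * 2) + 1 * (t * 2)) (fun t => by fun_prop)
          (fun t => by fun_prop) hb1 ?_ ?_ 0
        · filter_upwards [hL] with ω h θ
          refine (abs_add_le _ _).trans ?_
          have e : -Real.cos θ * ω 0 + -Real.sin θ * ω i =
            -(Real.cos θ * ω 0 + Real.sin θ * ω i) := by ring
          rw [e]
          simp only [abs_mul _ (_ * _), abs_neg, abs_mul t, abs_of_pos ht]
          gcongr
          · exact hc1 _
          · exact (h θ).2
          · exact (h θ).2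
          · exact hs1 _
          · exact (h θ).1
        · intro ω θ
          exact (((hlin ω θ).sin.neg).mul (hlin2 ω θ))
      have hz : ∀ θ : ℝ, ∫ ω : Rd (n+1), -Real.sin (t * (Real.cos θ * ω 0 + Real.sin θ * ω i)) *
            (t * (-Real.sin θ * ω 0 + Real.cos θ * ω i)) ∂μ = 0 := by
        intro θ
        refine (hD1 θ).unique ?_
        simp only [hG]
        exact hasDerivAt_const _ _
      simp only [hz] at hD2
      have h0 := hD2.unique (hasDerivAt_const _ _)
      have h0' : ∫ ω : Rd (n+1), (t * (Real.sin (t * ω 0) * ω 0) -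
          t ^ 2 * (Real.cos (t * ω 0) * (ω i) ^ 2)) ∂μ = 0 := by
        rw [← h0]
        congr 1; ext ω
        simp
        ring
      rw [integral_sub (hi1.const_mul _) ((hi2 i).const_mul _), integral_const_mul,
        integral_const_mul] at h0'
      have : t * (t * ∫ ω : Rd (n+1), Real.cos (t * ω 0) * (ω i) ^ 2 ∂μ) =
        t * ∫ ω : Rd (n+1), Real.sin (t * ω 0) * ω 0 ∂μ := by linarith
      exact mul_left_cancel₀ ht.ne' this
    have hsum : ∫ ω : Rd (n+1), Real.cos (t * ω 0) ∂μ =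
        ∑ i, ∫ ω : Rd (n+1), Real.cos (t * ω 0) * (ω i) ^ 2 ∂μ := by
      rw [← integral_finsetSum _ (fun i _ => hi2 i)]
      apply integral_congr_ae
      filter_upwards [hμ] with ω h
      rw [← Finset.mul_sum]
      have : ∑ i, ω i ^ 2 = 1 := by
        have := EuclideanSpace.real_norm_sq_eq ω
        rw [h] at this
        linarith
      rw [this, mul_one]
    have e1 : ∫ ω : Rd (n+1), (- Real.cos (t * ω 0) * ω 0 * ω 0) ∂μ =
        - ∫ ω : Rd (n+1), Real.cos (t * ω 0) * (ω 0) ^ 2 ∂μ := by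
      rw [← integral_neg]; congr 1; ext ω; ring
    have e2 : ∫ ω : Rd (n+1), (- Real.sin (t * ω 0) * ω 0) ∂μ =
        - ∫ ω : Rd (n+1), Real.sin (t * ω 0) * ω 0 ∂μ := by
      rw [← integral_neg]; congr 1; ext ω; ring
    simp only [e1, e2, hsum, Fin.sum_univ_succ]
    rw [show ∀ a b : ℝ, t * (a + b + -a) = t * b by intros; ring, Finset.mul_sum]
    rw [Finset.sum_congr rfl (fun i _ => key _ (Fin.succ_ne_zero i))]
    simp
  · intro t
    have := norm_integral_le_of_norm_le_const (μ := μ)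
      (f := fun ω : Rd (n+1) => Real.cos (t * ω 0)) (C := 1) (.of_forall fun ω => hc1 _)
    simpa using this

lemma continuous_fourierInv' {d : ℕ} {V : Rd d → ℂ} (hV : Integrable V) : Continuous (𝓕⁻ V) :=
  VectorFourier.fourierIntegral_continuous Real.continuous_fourierChar
    (L := -innerₗ (Rd d)) (by
      have : Continuous fun p : Rd d × Rd d => -(inner ℝ p.1 p.2) := by fun_prop
      exact this) hV

lemma ae_eq_fourierInv {d : ℕ} {v V : Rd d → ℂ} (hv : MemLp v 2 volume) (hV : Integrable V)
    (h : IsFT V v) : v =ᵐ[volume] 𝓕⁻ V := by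
  refine ae_eq_of_integral_contDiff_smul_eq (hv.locallyIntegrable (by norm_num))
    (continuous_fourierInv' hV).locallyIntegrable ?_
  intro g g_smooth g_cpt
  have hg₁ : HasCompactSupport (Complex.ofRealCLM ∘ g) := g_cpt.comp_left rfl
  have hg₂ : ContDiff ℝ (⊤ : ℕ∞) (Complex.ofRealCLM ∘ g) := by fun_prop
  set φ : SchwartzMap (Rd d) ℂ := hg₁.toSchwartzMap hg₂ with hφ
  have hφa : ∀ x, φ x = (g x : ℂ) := fun x => rfl
  have h1 := h (𝓕⁻ φ)
  rw [← SchwartzMap.fourier_coe, FourierTransform.fourier_fourierInv_eq] at h1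
  have h2 : ∫ x, 𝓕⁻ V x * φ x = ∫ ξ, V ξ * (𝓕⁻ φ : SchwartzMap (Rd d) ℂ) ξ := by
    rw [SchwartzMap.fourierInv_coe]
    have e : ∀ x, 𝓕⁻ V x = 𝓕 V (-x) := fun x => Real.fourierInv_eq_fourier_neg V x
    have e2 : 𝓕⁻ (φ : Rd d → ℂ) = 𝓕 (fun x => φ (-x)) := Real.fourierInv_eq_fourier_comp_neg _
    simp only [e, e2]
    rw [← integral_neg_eq_self]
    simp only [neg_neg]
    have := VectorFourier.integral_fourierIntegral_smul_eq_flip (L := innerₗ (Rd d))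
      (μ := volume) (ν := volume)
      Real.continuous_fourierChar continuous_inner hV (g := fun x => φ (-x)) φ.integrable.comp_neg
    simpa using! this
  calc ∫ x, g x • v x = ∫ x, v x * φ x := by
        congr 1; ext x; rw [hφa, Complex.real_smul, mul_comm]
    _ = ∫ x, 𝓕⁻ V x * φ x := by rw [h2, h1]
    _ = _ := by
        congr 1; ext x; rw [hφa, Complex.real_smul, mul_comm]

lemma radial_fourierInv {d : ℕ} {v w : Rd d → ℂ} (hw : Continuous w) (h : v =ᵐ[volume] w)
    (hv : Radial v) : Radial w := by
  intro x y hxy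
  obtain ⟨R, rfl⟩ := exists_isometry hxy
  have h1 : (w ∘ R) =ᵐ[volume] w := by
    have h2 : (v ∘ R) =ᵐ[volume] (w ∘ R) :=
      R.measurePreserving.quasiMeasurePreserving.ae_eq_comp h
    have h3 : v ∘ R = v := by
      ext z; exact hv _ _ (by simp)
    rw [h3] at h2
    exact h2.symm.trans h
  have := (Continuous.ae_eq_iff_eq volume (hw.comp R.continuous) hw).1 h1
  exact (congrFun this x).symm

lemma sphere_exp (n : ℕ) {μ : Measure (Rd (n+1))} [IsFiniteMeasure μ]
    (hR : ∀ R : Rd (n+1) ≃ₗᵢ[ℝ] Rd (n+1), MeasurePreserving R μ μ) (ξ : Rd (n+1)) :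
    ∫ ω, Complex.exp (((⟪ξ, ω⟫ : ℝ) : ℂ) * Complex.I) ∂μ
      = ((∫ ω : Rd (n+1), Real.cos (‖ξ‖ * ω 0) ∂μ : ℝ) : ℂ) := by
  have hs : ∫ ω, Real.sin ⟪ξ, ω⟫ ∂μ = 0 := by
    have := rot_inv hR (a := ξ) (b := -ξ) (by simp) Real.sin
    simp only [inner_neg_left, Real.sin_neg, integral_neg] at this
    linarith
  have hc : ∫ ω, Real.cos ⟪ξ, ω⟫ ∂μ = ∫ ω : Rd (n+1), Real.cos (‖ξ‖ * ω 0) ∂μ := by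
    have := rot_inv hR (a := ξ) (b := EuclideanSpace.single (0 : Fin (n+1)) ‖ξ‖) (by simp) Real.cos
    simpa [EuclideanSpace.inner_single_left] using this
  have hic : Integrable (fun ω => Real.cos ⟪ξ, ω⟫) μ :=
    Integrable.of_bound (by fun_prop) 1 (.of_forall fun ω => Real.abs_cos_le_one _)
  have his : Integrable (fun ω => Real.sin ⟪ξ, ω⟫) μ :=
    Integrable.of_bound (by fun_prop) 1 (.of_forall fun ω => Real.abs_sin_le_one _)
  simp only [Complex.exp_mul_I, ← Complex.ofReal_cos, ← Complex.ofReal_sin]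
  rw [integral_add hic.ofReal (his.ofReal.mul_const _), integral_mul_const, integral_complex_ofReal,
    integral_complex_ofReal, hs, hc]
  simp

lemma average_bound (n : ℕ) {μ : Measure (Rd (n+1))} [IsFiniteMeasure μ]
    (hμ : ∀ᵐ ω ∂μ, ‖ω‖ = 1)
    (hR : ∀ R : Rd (n+1) ≃ₗᵢ[ℝ] Rd (n+1), MeasurePreserving R μ μ)
    {V : Rd (n+1) → ℂ} (hV : Integrable V) (hrad : Radial (𝓕⁻ V)) (x : Rd (n+1)) :
    μ.real Set.univ * ‖𝓕⁻ V x‖ ≤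
      ∫ ξ, ‖V ξ‖ * |∫ ω : Rd (n+1), Real.cos ((2 * π * ‖x‖ * ‖ξ‖) * ω 0) ∂μ| := by
  have h1 : ∫ ω, 𝓕⁻ V (‖x‖ • ω) ∂μ = (μ.real Set.univ : ℂ) * 𝓕⁻ V x := by
    have : ∫ ω, 𝓕⁻ V (‖x‖ • ω) ∂μ = ∫ ω, 𝓕⁻ V x ∂μ := by
      apply integral_congr_ae
      filter_upwards [hμ] with ω h
      exact hrad _ _ (by simp [norm_smul, h])
    rw [this]; simp
  have h2 : ∫ ω, 𝓕⁻ V (‖x‖ • ω) ∂μ =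
      ∫ ξ, ((∫ ω : Rd (n+1), Real.cos ((2 * π * ‖x‖ * ‖ξ‖) * ω 0) ∂μ : ℝ) : ℂ) * V ξ := by
    simp only [Real.fourierInv_eq', smul_eq_mul]
    rw [integral_integral_swap]
    · congr 1; ext ξ
      rw [integral_mul_const]
      congr 1
      have := sphere_exp n hR ((2 * π * ‖x‖) • ξ)
      rw [norm_smul, Real.norm_of_nonneg (by positivity)] at this
      rw [← this]
      congr 1; ext ω
      simp only [inner_smul_left, inner_smul_right, RCLike.conj_to_real, mul_assoc]
    · have h3 : Integrable (fun p : Rd (n+1) × Rd (n+1) => V p.2) (μ.prod volume) :=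
        hV.comp_snd μ
      refine h3.bdd_mul (c := 1) (f := fun p : Rd (n+1) × Rd (n+1) =>
        Complex.exp (((2 * π * ⟪p.2, ‖x‖ • p.1⟫ : ℝ) : ℂ) * Complex.I)) ?_ ?_
      · exact Continuous.aestronglyMeasurable (by fun_prop)
      · exact .of_forall fun p => (Complex.norm_exp_ofReal_mul_I _).le
  calc μ.real Set.univ * ‖𝓕⁻ V x‖ = ‖(μ.real Set.univ : ℂ) * 𝓕⁻ V x‖ := by
        rw [norm_mul, Complex.norm_real, Real.norm_of_nonneg measureReal_nonneg]
    _ = ‖∫ ξ, ((∫ ω : Rd (n+1), Real.cos ((2 * π * ‖x‖ * ‖ξ‖) * ω 0) ∂μ : ℝ) : ℂ) * V ξ‖ := by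
        rw [← h1, h2]
    _ ≤ _ := by
        refine (norm_integral_le_integral_norm _).trans (le_of_eq ?_)
        congr 1; ext ξ
        rw [norm_mul, mul_comm, Complex.norm_real, Real.norm_eq_abs]

lemma line_integral (γ : ℝ) (hγ : 1 < γ) : ∃ A : ℝ, 0 < A ∧ ∀ ε ∈ Set.Ioo (0:ℝ) 1,
    Integrable (fun r : ℝ => (ε + |r - 1| ^ γ)⁻¹) ∧
    ∫ r : ℝ, (ε + |r - 1| ^ γ)⁻¹ ≤ A * ε ^ (1/γ - 1) := by
  have hI : Integrable (fun x : ℝ => (1 + ‖x‖) ^ (-γ)) :=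
    integrable_one_add_norm (by simpa using hγ)
  have hI0 : 0 ≤ ∫ x : ℝ, (1 + ‖x‖) ^ (-γ) := integral_nonneg fun x => by positivity
  refine ⟨2 ^ γ * (∫ x : ℝ, (1 + ‖x‖) ^ (-γ)) + 1, by positivity, fun ε hε => ?_⟩
  have hε0 : 0 < ε := hε.1
  set h : ℝ := ε ^ (1/γ) with hh
  have hh0 : 0 < h := by positivity
  have hhγ : h ^ γ = ε := by
    rw [hh, ← Real.rpow_mul hε0.le]; simp [(by linarith : γ ≠ 0)]
  have hpt : ∀ r : ℝ, (ε + |r - 1| ^ γ)⁻¹ ≤ 2 ^ γ * ε⁻¹ * (1 + ‖(r - 1) / h‖) ^ (-γ) := by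
    intro r
    have e1 : (h + |r - 1|) ^ γ ≤ 2 ^ γ * (ε + |r - 1| ^ γ) := by
      rw [← hhγ]
      have ha := abs_nonneg (r - 1)
      have p1 : 0 ≤ h ^ γ := by positivity
      have p2 : 0 ≤ |r - 1| ^ γ := by positivity
      rcases le_total h |r - 1| with hle | hle
      · calc (h + |r - 1|) ^ γ ≤ (2 * |r - 1|) ^ γ := by gcongr; linarith
          _ = 2 ^ γ * |r - 1| ^ γ := Real.mul_rpow (by norm_num) ha
          _ ≤ _ := by gcongr; linarith
      · calc (h + |r - 1|) ^ γ ≤ (2 * h) ^ γ := by gcongr; linarith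
          _ = 2 ^ γ * h ^ γ := Real.mul_rpow (by norm_num) hh0.le
          _ ≤ _ := by gcongr; linarith
    have e2 : h + |r - 1| = h * (1 + ‖(r - 1) / h‖) := by
      rw [norm_div, Real.norm_eq_abs, Real.norm_of_nonneg hh0.le]; field_simp
    rw [e2, Real.mul_rpow hh0.le (by positivity), hhγ] at e1
    rw [Real.rpow_neg (by positivity)]
    have e3 : 0 < (1 + ‖(r - 1) / h‖) ^ γ := by positivity
    have e4 : 0 < ε + |r - 1| ^ γ := by positivity
    rw [inv_le_iff_one_le_mul₀ e4]
    rw [show 2 ^ γ * ε⁻¹ * ((1 + ‖(r - 1) / h‖) ^ γ)⁻¹ * (ε + |r - 1| ^ γ) =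
      (2 ^ γ * (ε + |r - 1| ^ γ)) / (ε * (1 + ‖(r - 1) / h‖) ^ γ) by field_simp]
    rwa [one_le_div (by positivity)]
  have hI2 : Integrable (fun r : ℝ => (1 + ‖(r - 1) / h‖) ^ (-γ)) :=
    (hI.comp_div hh0.ne').comp_sub_right 1
  have hI3 := hI2.const_mul (2 ^ γ * ε⁻¹)
  have hmeas : AEStronglyMeasurable (fun r : ℝ => (ε + |r - 1| ^ γ)⁻¹) volume :=
    Measurable.aestronglyMeasurable (by fun_prop)
  have hint : Integrable (fun r : ℝ => (ε + |r - 1| ^ γ)⁻¹) := by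
    refine hI3.mono' hmeas (.of_forall fun r => ?_)
    rw [Real.norm_of_nonneg (by positivity)]
    exact hpt r
  refine ⟨hint, (integral_mono hint hI3 hpt).trans ?_⟩
  rw [integral_const_mul, integral_sub_right_eq_self (fun r : ℝ => (1 + ‖r / h‖) ^ (-γ)) 1,
    Measure.integral_comp_div (fun r : ℝ => (1 + ‖r‖) ^ (-γ)) h, abs_of_pos hh0, smul_eq_mul,
    Real.rpow_sub hε0, Real.rpow_one, ← hh]
  have : 0 < h / ε := by positivity
  calc _ = 2 ^ γ * (∫ x : ℝ, (1 + ‖x‖) ^ (-γ)) * (h / ε) := by ring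
    _ ≤ _ := by nlinarith

lemma shell_integral (d : ℕ) (hd : 1 ≤ d) (γ : ℝ) (hγ : 1 < γ) : ∃ A : ℝ, 0 < A ∧
    ∀ ε ∈ Set.Ioo (0:ℝ) 1,
    Integrable (fun ξ : Rd d => (Set.Icc (1/2 : ℝ) (3/2)).indicator
        (fun r => (ε + |r - 1| ^ γ)⁻¹) ‖ξ‖) ∧
    ∫ ξ : Rd d, (Set.Icc (1/2 : ℝ) (3/2)).indicator (fun r => (ε + |r - 1| ^ γ)⁻¹) ‖ξ‖
      ≤ A * ε ^ (1/γ - 1) := by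
  obtain ⟨A, hA, hline⟩ := line_integral γ hγ
  have hne : Nonempty (Fin d) := ⟨⟨0, hd⟩⟩
  set b := (volume : Measure (Rd d)).real (Metric.ball 0 1) with hb
  refine ⟨d * (b * ((3/2) ^ (d - 1) * A)) + 1, by positivity, fun ε hε => ?_⟩
  obtain ⟨hI, hle⟩ := hline ε hε
  have hε0 : 0 < ε := hε.1
  set F : ℝ → ℝ := (Set.Icc (1/2 : ℝ) (3/2)).indicator (fun r => (ε + |r - 1| ^ γ)⁻¹) with hF
  have hbd : ∀ r ∈ Set.Ioi (0 : ℝ), ‖r ^ (d - 1) • F r‖ ≤ (3/2) ^ (d - 1) * (ε + |r - 1| ^ γ)⁻¹ := by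
    intro r hr
    have hr0 : (0 : ℝ) < r := hr
    rw [hF, norm_smul, norm_pow, Real.norm_of_nonneg hr0.le]
    by_cases h : r ∈ Set.Icc (1/2 : ℝ) (3/2)
    · rw [Set.indicator_of_mem h, Real.norm_of_nonneg (by positivity)]
      have := h.2
      gcongr
    · rw [Set.indicator_of_notMem h]
      simp only [norm_zero, mul_zero]
      positivity
  have hFm : Measurable F := Measurable.indicator (by fun_prop) measurableSet_Icc
  have hIr : IntegrableOn (fun r : ℝ => (3/2) ^ (d - 1) * (ε + |r - 1| ^ γ)⁻¹) (Set.Ioi 0) :=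
    (hI.const_mul _).integrableOn
  have hint : IntegrableOn (fun r => r ^ (d - 1) • F r) (Set.Ioi 0) := by
    refine Integrable.mono' hIr ?_ ?_
    · exact Measurable.aestronglyMeasurable (by fun_prop)
    · exact (ae_restrict_iff' measurableSet_Ioi).2 (.of_forall hbd)
  have hfr : Module.finrank ℝ (Rd d) = d := by simp
  constructor
  · have := (integrable_fun_norm_addHaar (volume : Measure (Rd d)) (f := F)).2
    rw [hfr] at this
    exact this hint
  · have := integral_fun_norm_addHaar (volume : Measure (Rd d)) F
    rw [hfr] at this
    rw [this]
    have h1 : ∫ r in Set.Ioi (0 : ℝ), r ^ (d - 1) • F r ≤ (3/2) ^ (d - 1) * (A * ε ^ (1/γ - 1)) := by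
      calc _ ≤ ∫ r in Set.Ioi (0 : ℝ), (3/2) ^ (d - 1) * (ε + |r - 1| ^ γ)⁻¹ :=
            setIntegral_mono_on hint hIr measurableSet_Ioi
              (fun r hr => (le_abs_self _).trans (hbd r hr))
        _ ≤ ∫ r : ℝ, (3/2) ^ (d - 1) * (ε + |r - 1| ^ γ)⁻¹ :=
            setIntegral_le_integral (hI.const_mul _) (.of_forall fun r => by
              simp only [Pi.zero_apply]; positivity)
        _ ≤ _ := by rw [integral_const_mul]; gcongr
    rw [nsmul_eq_mul, smul_eq_mul]
    have hp : 0 < ε ^ (1/γ - 1) := by positivity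
    calc (d : ℝ) * (b * ∫ r in Set.Ioi (0 : ℝ), r ^ (d - 1) • F r)
        ≤ d * (b * ((3/2) ^ (d - 1) * (A * ε ^ (1/γ - 1)))) := by gcongr
      _ = d * (b * ((3/2) ^ (d - 1) * A)) * ε ^ (1/γ - 1) := by ring
      _ ≤ _ := by nlinarith

lemma L1_bound (d : ℕ) (hd : 1 ≤ d) (γ c : ℝ) (hγ : 1 < γ) (hc : 0 < c) : ∃ A : ℝ, 0 < A ∧
    ∀ ε ∈ Set.Ioo (0:ℝ) 1, ∀ g : ℝ → ℝ, Measurable g → (∀ r, 0 < g r) →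
      (∀ r : ℝ, |r - 1| ≤ 1/2 → c * (ε + |r - 1| ^ γ) ≤ g r) →
      ∀ V : Rd d → ℂ, MemLp V 2 volume →
        (∀ᵐ ξ : Rd d, ¬ (1/2 ≤ ‖ξ‖ ∧ ‖ξ‖ ≤ 3/2) → V ξ = 0) →
        Integrable (fun ξ : Rd d => ‖V ξ‖ ^ 2 * g ‖ξ‖) volume →
        ∫ ξ, ‖V ξ‖ ≤ A * ε ^ ((1/γ - 1) / 2) *
          (∫ ξ : Rd d, ‖V ξ‖ ^ 2 * g ‖ξ‖) ^ ((1 : ℝ)/2) := by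
  obtain ⟨A, hA, hshell⟩ := shell_integral d hd γ hγ
  refine ⟨(c⁻¹ * A) ^ ((1:ℝ)/2), by positivity, fun ε hε g hgm hg0 hg V hV hsupp hq => ?_⟩
  obtain ⟨hI, hle⟩ := hshell ε hε
  have hε0 : 0 < ε := hε.1
  set G : Rd d → ℝ := fun ξ => (Set.Icc (1/2 : ℝ) (3/2)).indicator (fun r => (√(g r))⁻¹) ‖ξ‖ with hG
  set f : Rd d → ℝ := fun ξ => ‖V ξ‖ * √(g ‖ξ‖) with hf
  have hfm : AEStronglyMeasurable f volume :=
    hV.1.norm.mul (Measurable.aestronglyMeasurable (by fun_prop))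
  have hGm : AEStronglyMeasurable G volume := by
    refine Measurable.aestronglyMeasurable ?_
    exact (Measurable.indicator (by fun_prop) measurableSet_Icc).comp measurable_norm
  have hf2 : ∀ ξ, f ξ ^ 2 = ‖V ξ‖ ^ 2 * g ‖ξ‖ := by
    intro ξ; rw [hf, mul_pow, Real.sq_sqrt (hg0 _).le]
  have hG2 : ∀ ξ, G ξ ^ 2 ≤ c⁻¹ * (Set.Icc (1/2 : ℝ) (3/2)).indicator
        (fun r => (ε + |r - 1| ^ γ)⁻¹) ‖ξ‖ := by
    intro ξ
    by_cases h : ‖ξ‖ ∈ Set.Icc (1/2 : ℝ) (3/2)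
    · simp only [hG, Set.indicator_of_mem h]
      rw [inv_pow, Real.sq_sqrt (hg0 _).le, ← mul_inv]
      apply inv_anti₀ (by positivity)
      apply hg
      rw [abs_le]; constructor <;> linarith [h.1, h.2]
    · simp only [hG, Set.indicator_of_notMem h]
      simp
  have hIc := hI.const_mul c⁻¹
  have hGi : Integrable (fun ξ => G ξ ^ 2) := by
    refine hIc.mono' (hGm.pow 2) (.of_forall fun ξ => ?_)
    rw [Real.norm_of_nonneg (sq_nonneg _)]
    exact hG2 ξ
  have hfL : MemLp f (ENNReal.ofReal 2) volume := by
    rw [show ENNReal.ofReal 2 = 2 by simp, memLp_two_iff_integrable_sq hfm]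
    simpa only [hf2] using hq
  have hGL : MemLp G (ENNReal.ofReal 2) volume := by
    rw [show ENNReal.ofReal 2 = 2 by simp, memLp_two_iff_integrable_sq hGm]
    exact hGi
  have hG0 : ∀ ξ, 0 ≤ G ξ := fun ξ => Set.indicator_nonneg (fun r _ => by positivity) _
  have H := integral_mul_le_Lp_mul_Lq_of_nonneg Real.HolderConjugate.two_two
    (.of_forall fun ξ => by simp only [hf, Pi.zero_apply]; positivity)
    (.of_forall hG0) hfL hGL
  have e1 : ∫ ξ, f ξ * G ξ = ∫ ξ, ‖V ξ‖ := by
    apply integral_congr_ae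
    filter_upwards [hsupp] with ξ h
    by_cases hm : ‖ξ‖ ∈ Set.Icc (1/2 : ℝ) (3/2)
    · simp only [hf, hG, Set.indicator_of_mem hm]
      have := Real.sqrt_pos.2 (hg0 ‖ξ‖)
      field_simp
    · simp [hf, h hm]
  have e2 : ∫ ξ, G ξ ^ 2 ≤ c⁻¹ * A * ε ^ (1/γ - 1) := by
    calc _ ≤ _ := integral_mono hGi hIc hG2
      _ ≤ _ := by rw [integral_const_mul, mul_assoc]; gcongr
  rw [e1] at H
  simp only [Real.rpow_two, hf2] at H
  have e3 : (∫ ξ, G ξ ^ 2) ^ ((1:ℝ)/2) ≤ (c⁻¹ * A) ^ ((1:ℝ)/2) * ε ^ ((1/γ - 1) / 2) := by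
    calc _ ≤ (c⁻¹ * A * ε ^ (1/γ - 1)) ^ ((1:ℝ)/2) :=
          Real.rpow_le_rpow (integral_nonneg fun ξ => sq_nonneg _) e2 (by norm_num)
      _ = _ := by
          rw [Real.mul_rpow (by positivity) (by positivity), ← Real.rpow_mul hε0.le]
          congr 2; ring
  have e4 : 0 ≤ ∫ ξ, ‖V ξ‖ ^ 2 * g ‖ξ‖ :=
    integral_nonneg fun ξ => mul_nonneg (sq_nonneg _) (hg0 _).le
  calc _ ≤ _ := H
    _ ≤ _ := mul_le_mul_of_nonneg_left e3 (by positivity)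
    _ = _ := by ring

/-- radial pointwise decay estimate from §2.1: a radial `L²` function
whose Fourier transform is supported in the shell `1/2 ≤ |ξ| ≤ 3/2` has a continuous
representative with `|v(x)| ≲ (1+|x|)^{(1-d)/2} ε^{(1/γ-1)/2} q_ε(v)^{1/2}`. -/
theorem stmt17 (d : ℕ) (hd : 2 ≤ d)
    (s γ c C : ℝ)
    (hs : (d : ℝ) / ((d : ℝ) + 1) < s) (hγ : 1 < γ)
    (hc : 0 < c) (hcC : c ≤ C) :
    ∃ C' : ℝ, 0 < C' ∧
      ∀ g : ℝ → ℝ → ℝ, IsAdmissible s γ c C g →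
        ∀ ε ∈ Set.Ioo (0:ℝ) 1,
          ∀ v V : Rd d → ℂ,
            MemLp v 2 volume → MemLp V 2 volume → IsFT V v → Radial v →
            (∀ᵐ ξ : Rd d, ¬ (1/2 ≤ ‖ξ‖ ∧ ‖ξ‖ ≤ 3/2) → V ξ = 0) →
            Integrable (fun ξ : Rd d => ‖V ξ‖ ^ 2 * g ε ‖ξ‖) volume →
            ∃ vc : Rd d → ℂ, Continuous vc ∧ v =ᵐ[volume] vc ∧
              ∀ x : Rd d, ‖vc x‖ ≤ C' * (1 + ‖x‖) ^ ((1 - (d : ℝ)) / 2)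
                  * ε ^ ((1/γ - 1) / 2)
                  * (∫ ξ : Rd d, ‖V ξ‖ ^ 2 * g ε ‖ξ‖) ^ ((1 : ℝ)/2) := by
  obtain ⟨n, rfl⟩ : ∃ n, d = n + 1 := ⟨d - 1, by omega⟩
  have hn : 1 ≤ n := by omega
  obtain ⟨μ, hfin, hμ0, hμ, hR⟩ := exists_sphere_measure (n + 1) (by omega)
  obtain ⟨K, hK, hdecay⟩ := sphere_decay n hn hμ hR
  obtain ⟨A, hA, hL1⟩ := L1_bound (n + 1) (by omega) γ c hγ hc
  have hm : 0 < μ.real Set.univ := by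
    rw [measureReal_def]
    exact ENNReal.toReal_pos (by simpa using hμ0) (measure_ne_top _ _)
  refine ⟨(μ.real Set.univ)⁻¹ * K * A, by positivity, ?_⟩
  intro g hg ε hε v V hv hV hFT hrad hsupp hq
  have hVint : Integrable V := by
    have h1 : Integrable V (volume.restrict (Metric.closedBall 0 (3/2))) := by
      have : IsFiniteMeasure (volume.restrict (Metric.closedBall (0 : Rd (n+1)) (3/2))) :=
        ⟨by simpa using measure_closedBall_lt_top⟩
      exact (hV.restrict _).integrable (by norm_num)
    refine (integrableOn_iff_integrable_of_support_subset
      (f := (Metric.closedBall (0 : Rd (n+1)) (3/2)).indicator V) Set.support_indicator_subset).1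
      ?_ |>.congr ?_
    · exact (integrableOn_congr_fun (fun x hx => by simp only [Set.indicator_of_mem hx])
        measurableSet_closedBall).2 h1
    · filter_upwards [hsupp] with ξ h
      by_cases hx : ξ ∈ Metric.closedBall (0 : Rd (n+1)) (3/2)
      · rw [Set.indicator_of_mem hx]
      · rw [Set.indicator_of_notMem hx, h]
        rintro ⟨-, h2⟩
        exact hx (by simpa using h2)
  have hcont := continuous_fourierInv' hVint
  have hae := ae_eq_fourierInv hv hVint hFT
  have hrad' := radial_fourierInv hcont hae hrad
  refine ⟨𝓕⁻ V, hcont, hae, fun x => ?_⟩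
  have hav := average_bound n hμ hR hVint hrad' x
  have hx1 : 0 < 1 + ‖x‖ := by positivity
  have hexp : (1 - ((n + 1 : ℕ) : ℝ)) / 2 = -(n : ℝ) / 2 := by push_cast; ring
  rw [hexp]
  have hb : ∫ ξ, ‖V ξ‖ * |∫ ω : Rd (n+1), Real.cos ((2 * π * ‖x‖ * ‖ξ‖) * ω 0) ∂μ| ≤
      ∫ ξ, ‖V ξ‖ * (K * (1 + ‖x‖) ^ (-(n : ℝ) / 2)) := by
    refine integral_mono_of_nonneg (.of_forall fun ξ => by simp only [Pi.zero_apply]; positivity)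
      (hVint.norm.mul_const _) ?_
    filter_upwards [hsupp] with ξ h
    by_cases hm : 1/2 ≤ ‖ξ‖ ∧ ‖ξ‖ ≤ 3/2
    · gcongr
      refine (hdecay _ (by positivity)).trans ?_
      gcongr K * ?_
      apply Real.rpow_le_rpow_of_nonpos hx1
      · have h3 : 1 ≤ 2 * π * ‖ξ‖ := by nlinarith [Real.pi_gt_three, hm.1]
        nlinarith [norm_nonneg x]
      · have : (0:ℝ) ≤ n := by positivity
        linarith
    · simp [h hm]
  rw [integral_mul_const] at hb
  have hfinal := hL1 ε hε (g ε) (hg.1 ε hε) (hg.2.1 ε hε)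
    (fun r hr => (hg.2.2.2 ε hε r hr).1) V hV hsupp hq
  have hp : 0 < (1 + ‖x‖) ^ (-(n : ℝ) / 2) := by positivity
  have h1 : μ.real Set.univ * ‖𝓕⁻ V x‖ ≤ (A * ε ^ ((1/γ - 1) / 2) *
      (∫ ξ : Rd (n+1), ‖V ξ‖ ^ 2 * g ε ‖ξ‖) ^ ((1 : ℝ)/2)) *
      (K * (1 + ‖x‖) ^ (-(n : ℝ) / 2)) :=
    (hav.trans hb).trans (mul_le_mul_of_nonneg_right hfinal (by positivity))
  calc ‖𝓕⁻ V x‖ = (μ.real Set.univ)⁻¹ * (μ.real Set.univ * ‖𝓕⁻ V x‖) := by field_simp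
    _ ≤ (μ.real Set.univ)⁻¹ * _ := mul_le_mul_of_nonneg_left h1 (by positivity)
    _ = _ := by ring
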